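/- The preadapted switch distribution is weakly universal: for every stationary probability measure Q on Ω = {1,...,D}^ℤ, lim_{n→∞} (1/n)·E_Q[−log P(X_1^n)] = h_Q. -/

import Mathlib

open Filter MeasureTheory
open scoped Topology

/-- Number of occurrences `c(w|z)` of `w` as a substring of `z`. -/
def cnt {D : ℕ} (w z : List (Fin D)) : ℕ :=
  ((List.range (z.length - w.length + 1)).filter
    (fun i => (z.drop i).take w.length = w)).length

/-- Count `c(w | z_1^{m-1})` of `w` in the string `z` with its last symbol removed,
with the convention that counting in a block of length `-1` (i.e. when `z` itself is
empty) gives `0`. -/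
def cntPred {D : ℕ} (w z : List (Fin D)) : ℕ :=
  if z = [] then 0 else cnt w z.dropLast

/-- The prefix `x_1^n` of the one-sided sequence `x` (0-indexed: `x i = x_{i+1}`). -/
def pref {D : ℕ} (x : ℕ → Fin D) (n : ℕ) : List (Fin D) :=
  (List.range n).map x

/-- Adaptive Markov predictor: the natural-number index corresponds to the Markov
order shifted by one, so `Bpred D xs a (k+1) = B(a | xs, k)` and
`Bpred D xs a 0 = B(a | xs, -1) = 1/D`, where
`B(x_{n+1}|x_1^n, k) = (c(x_{n+1-k}^{n+1}|x_1^n) + B(x_{n+1}|x_1^n, k-1)) /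
(c(x_{n+1-k}^{n}|x_1^{n-1}) + 1)`.  Counts of substrings whose indices fall outside
the string are taken to be zero. -/
noncomputable def Bpred (D : ℕ) (xs : List (Fin D)) (a : Fin D) : ℕ → ℝ
  | 0 => 1 / D
  | k + 1 =>
    if k ≤ xs.length then
      ((cnt (xs.drop (xs.length - k) ++ [a]) xs : ℝ) + Bpred D xs a k) /
      ((cntPred (xs.drop (xs.length - k)) xs : ℝ) + 1)
    else Bpred D xs a k

/-- Preadapted Markov predictor with training data `y`: the natural-number index
corresponds to the Markov order shifted by one, so `BpredPre D y xs a (k+1) = B(a|xs,k)`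
and `BpredPre D y xs a 0 = 1/D`, where
`B(x_{n+1}|x_1^n, k) = (c(x_{n+1-k}^{n+1}|y_1^j x_1^n) + B(x_{n+1}|x_1^n, k-1)) /
(c(x_{n+1-k}^{n}|y_1^j x_1^{n-1}) + 1)`: counts are taken in the concatenated string,
and counts of substrings whose indices fall outside the available string are zero. -/
noncomputable def BpredPre (D : ℕ) (y xs : List (Fin D)) (a : Fin D) : ℕ → ℝ
  | 0 => 1 / D
  | k + 1 =>
    if k ≤ xs.length then
      ((cnt (xs.drop (xs.length - k) ++ [a]) (y ++ xs) : ℝ) + BpredPre D y xs a k) /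
      ((cntPred (xs.drop (xs.length - k)) (y ++ xs) : ℝ) + 1)
    else BpredPre D y xs a k

/-- Partial preadapted switch distribution `P(x_1^n, k)` with Markov order `k : ℤ`. -/
noncomputable def PpartPre (D : ℕ) (p : ℕ → ℝ) (y : List (Fin D)) (x : ℕ → Fin D) :
    ℕ → ℤ → ℝ
  | 0, _ => 0
  | 1, k =>
    if k = -1 then p 0 * BpredPre D y [] (x 0) 0
    else if k = 0 then (1 - p 0) * BpredPre D y [] (x 0) 1
    else 0
  | n + 2, k =>
    if -1 ≤ k ∧ k ≤ (n : ℤ) + 1 then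
      (p (n + 1) * PpartPre D p y x (n + 1) k +
        (1 - p (n + 1)) * PpartPre D p y x (n + 1) (k - 1)) *
        BpredPre D y (pref x (n + 1)) (x (n + 1)) (k + 1).toNat
    else 0

/-- The preadapted switch distribution `P(x_1^n) = Σ_{k=-1}^{n-1} P(x_1^n, k)`. -/
noncomputable def swPre (D : ℕ) (p : ℕ → ℝ) (y : List (Fin D)) (x : ℕ → Fin D) (n : ℕ) : ℝ :=
  ∑ kk ∈ Finset.range (n + 1), PpartPre D p y x n ((kk : ℤ) - 1)

/-- The two-sided sequence space `Ω = {1,...,D}^ℤ` with the product σ-algebra. -/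
abbrev Omega (D : ℕ) := ℤ → Fin D

/-- The shift `T : Ω → Ω`. -/
def shiftT (D : ℕ) : Omega D → Omega D := fun ω i => ω (i + 1)

/-- The cylinder set `{X_1 = x 0, ..., X_n = x (n-1)}`. -/
def cylSet (D : ℕ) (x : ℕ → Fin D) (n : ℕ) : Set (Omega D) :=
  {ω | ∀ i < n, ω ((i : ℤ) + 1) = x i}

/-- The one-sided sample path `X_1, X_2, ...` of `ω` (0-indexed). -/
def path (D : ℕ) (ω : Omega D) : ℕ → Fin D := fun i => ω ((i : ℤ) + 1)

/-- The cylinder probability `Q(x_1^n)`. -/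
noncomputable def Qstr (D : ℕ) (Q : Measure (Omega D)) (x : ℕ → Fin D) (n : ℕ) : ℝ :=
  (Q (cylSet D x n)).toReal


section helpers

lemma cnt_nil' {D : ℕ} (v : List (Fin D)) : cnt v [] = if v = [] then 1 else 0 := by
  unfold cnt
  by_cases h : v = []
  · subst h; simp
  · simp [h, List.range_succ, Ne.symm h]

lemma cnt_snoc' {D : ℕ} (v z : List (Fin D)) (b : Fin D) :
    cnt v (z ++ [b]) = cnt v z + if v <:+ z ++ [b] then 1 else 0 := by
  unfold cnt
  by_cases h : v.length ≤ z.length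
  · have e1 : (z ++ [b]).length - v.length + 1 = (z.length - v.length + 1) + 1 := by
      simp; omega
    rw [e1, List.range_succ, List.filter_append, List.length_append]
    congr 1
    · congr 1
      apply List.filter_congr
      intro i hi
      have hi' := List.mem_range.1 hi
      have : List.take v.length (List.drop i (z ++ [b])) = List.take v.length (List.drop i z) := by
        rw [List.drop_append_of_le_length (by omega), List.take_append_of_le_length (by simp; omega)]
      rw [this]
    · have e2 : (z ++ [b]).length - v.length = z.length - v.length + 1 := by simp; omega
      have e0 : v <:+ z ++ [b] ↔ v = List.drop (z.length - v.length + 1) (z ++ [b]) := by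
        rw [List.suffix_iff_eq_drop, e2]
      have e3 : List.take v.length (List.drop (z.length - v.length + 1) (z ++ [b]))
          = List.drop (z.length - v.length + 1) (z ++ [b]) := by
        apply List.take_of_length_le; simp; omega
      by_cases hv : v = List.drop (z.length - v.length + 1) (z ++ [b])
      · rw [if_pos (e0.2 hv), List.filter_singleton, e3, ← hv]; simp
      · rw [if_neg (fun h => hv (e0.1 h)), List.filter_singleton, e3]; simp [Ne.symm hv]
  · push Not at h
    have e1 : (z ++ [b]).length - v.length + 1 = 1 := by simp; omega
    have e2 : z.length - v.length + 1 = 1 := by omega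
    rw [e1, e2]
    have e3 : z ≠ v := by rintro rfl; omega
    have e4 : List.take v.length z = z := List.take_of_length_le (by omega)
    have e5 : List.take v.length (z ++ [b]) = z ++ [b] := List.take_of_length_le (by simp; omega)
    have e6 : v <:+ z ++ [b] ↔ z ++ [b] = v := by
      constructor
      · intro hs
        exact (hs.eq_of_length_le (by simp; omega)).symm
      · rintro rfl; exact List.suffix_rfl
    by_cases hv : z ++ [b] = v <;> simp [List.range_succ, e4, e5, e3, e6, hv]

lemma cntPred_snoc' {D : ℕ} (w z : List (Fin D)) (b : Fin D) :
    cntPred w (z ++ [b]) = cnt w z := by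
  simp [cntPred]

lemma cnt_eq' {D : ℕ} (w z : List (Fin D)) :
    cnt w z = cntPred w z + if w <:+ z then 1 else 0 := by
  induction z using List.reverseRecOn with
  | nil => simp [cnt_nil', cntPred]
  | append_singleton z b ih => rw [cnt_snoc', cntPred_snoc']

lemma snoc_suffix {D : ℕ} (w z : List (Fin D)) (a b : Fin D) :
    w ++ [a] <:+ z ++ [b] ↔ w <:+ z ∧ a = b := by
  constructor
  · rintro ⟨t, ht⟩
    rw [← List.append_assoc] at ht
    have := List.append_inj' ht rfl
    exact ⟨⟨t, this.1⟩, by simpa using this.2⟩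
  · rintro ⟨⟨t, rfl⟩, rfl⟩
    exact ⟨t, by simp⟩

lemma cntPred_sum {D : ℕ} (w z : List (Fin D)) :
    cntPred w z = ∑ a, cnt (w ++ [a]) z := by
  induction z using List.reverseRecOn with
  | nil => simp [cnt_nil', cntPred]
  | append_singleton z b ih =>
    rw [cntPred_snoc', cnt_eq', ih]
    simp_rw [cnt_snoc', Finset.sum_add_distrib, snoc_suffix]
    congr 1
    by_cases h : w <:+ z <;> simp [h]

lemma cnt_le' {D : ℕ} (v z : List (Fin D)) : cnt v z ≤ z.length + 1 := by
  unfold cnt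
  refine (List.length_filter_le _ _).trans ?_
  simp

lemma cntPred_le' {D : ℕ} (v z : List (Fin D)) : cntPred v z ≤ z.length + 1 := by
  have := cnt_eq' v z
  have := cnt_le' v z
  omega

lemma Bpre_sum {D : ℕ} (hD : 2 ≤ D) (y xs : List (Fin D)) (k : ℕ) :
    ∑ a, BpredPre D y xs a k = 1 := by
  have : (D : ℝ) ≠ 0 := by positivity
  induction k with
  | zero => simp [BpredPre, this]
  | succ k ih =>
    simp only [BpredPre]
    split_ifs with h
    · rw [← Finset.sum_div, Finset.sum_add_distrib, ih, cntPred_sum]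
      push_cast
      apply div_self
      positivity
    · exact ih

lemma Bpre_ge {D : ℕ} (hD : 2 ≤ D) (y xs : List (Fin D)) (a : Fin D) (M : ℝ)
    (hM : (y.length + xs.length + 2 : ℝ) ≤ M) (k : ℕ) :
    1 / (D * M ^ k) ≤ BpredPre D y xs a k := by
  have h0 : (0 : ℝ) < D := by positivity
  have hM1 : (1 : ℝ) ≤ M := by
    have : (0 : ℝ) ≤ y.length + xs.length := by positivity
    linarith
  induction k with
  | zero => simp [BpredPre]
  | succ k ih =>
    simp only [BpredPre]
    split_ifs with h
    · have h1 := cntPred_le' (xs.drop (xs.length - k)) (y ++ xs)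
      have h2 : (cntPred (xs.drop (xs.length - k)) (y ++ xs) : ℝ) + 1 ≤ M := by
        have : (cntPred (xs.drop (xs.length - k)) (y ++ xs) : ℝ) ≤ ((y ++ xs).length + 1 : ℕ) := by
          exact_mod_cast h1
        push_cast [List.length_append] at this
        linarith
      have : 1 / (D * M ^ (k + 1)) = (1 / (D * M ^ k)) / M := by
        rw [pow_succ, div_div]; ring_nf
      rw [this]
      have hc : (0 : ℝ) ≤ cnt (xs.drop (xs.length - k) ++ [a]) (y ++ xs) := by positivity
      apply div_le_div₀ _ _ (by positivity) h2
      · exact add_nonneg hc (le_trans (by positivity) ih)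
      · linarith
    · refine le_trans ?_ ih
      apply one_div_le_one_div_of_le (by positivity)
      have : M ^ k ≤ M ^ (k+1) := pow_le_pow_right₀ hM1 (by omega)
      gcongr
      

lemma Bpre_pos {D : ℕ} (hD : 2 ≤ D) (y xs : List (Fin D)) (a : Fin D) (k : ℕ) :
    0 < BpredPre D y xs a k := by
  refine lt_of_lt_of_le ?_ (Bpre_ge hD y xs a _ le_rfl k)
  positivity

lemma pref_succ {D : ℕ} (x : ℕ → Fin D) (n : ℕ) : pref x (n+1) = pref x n ++ [x n] := by
  simp [pref, List.range_succ]

lemma pref_length {D : ℕ} (x : ℕ → Fin D) (n : ℕ) : (pref x n).length = n := by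
  simp [pref]

lemma pref_drop {D : ℕ} (x : ℕ → Fin D) (m k : ℕ) :
    (pref x (m + k)).drop m = List.ofFn (fun i : Fin k => x (m + i)) := by
  apply List.ext_getElem
  · simp [pref]
  · intro i h1 h2
    simp [pref]

/-- potentials -/
noncomputable def ell (e : ℝ) : ℕ → ℝ
  | 0 => - e
  | c + 1 => Real.log (c.factorial)

noncomputable def Lpot (D k : ℕ) (e : ℝ) (z : List (Fin D)) : ℝ :=
  ∑ w : Fin k → Fin D, (Real.log ((cntPred (List.ofFn w) z).factorial)
    - ∑ a, ell e (cnt (List.ofFn w ++ [a]) z))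

lemma suffix_ofFn {D k : ℕ} (w w0 : Fin k → Fin D) (t : List (Fin D)) :
    List.ofFn w <:+ t ++ List.ofFn w0 ↔ w = w0 := by
  constructor
  · rintro ⟨s, hs⟩
    have := List.append_inj' hs (by simp)
    exact List.ofFn_injective this.2
  · rintro rfl
    exact List.suffix_append _ _

lemma Lpot_step {D k : ℕ} (e : ℝ) (t : List (Fin D)) (w0 : Fin k → Fin D) (b : Fin D) :
    Lpot D k e ((t ++ List.ofFn w0) ++ [b]) = Lpot D k e (t ++ List.ofFn w0)
      + (Real.log (cntPred (List.ofFn w0) (t ++ List.ofFn w0) + 1)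
        - (ell e (cnt (List.ofFn w0 ++ [b]) (t ++ List.ofFn w0) + 1)
          - ell e (cnt (List.ofFn w0 ++ [b]) (t ++ List.ofFn w0)))) := by
  unfold Lpot
  rw [← sub_eq_iff_eq_add', ← Finset.sum_sub_distrib, Finset.sum_eq_single w0]
  · rw [cntPred_snoc', cnt_eq']
    have h1 : List.ofFn w0 <:+ t ++ List.ofFn w0 := List.suffix_append _ _
    rw [if_pos h1, Nat.factorial_succ]
    push_cast
    rw [Real.log_mul (by positivity) (by positivity)]
    have : ∑ a, ell e (cnt (List.ofFn w0 ++ [a]) ((t ++ List.ofFn w0) ++ [b]))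
      - ∑ a, ell e (cnt (List.ofFn w0 ++ [a]) (t ++ List.ofFn w0)) = 
        (ell e (cnt (List.ofFn w0 ++ [b]) (t ++ List.ofFn w0) + 1)
          - ell e (cnt (List.ofFn w0 ++ [b]) (t ++ List.ofFn w0))) := by
      rw [← Finset.sum_sub_distrib, Finset.sum_eq_single b]
      · rw [cnt_snoc', if_pos ((snoc_suffix _ _ _ _).2 ⟨h1, rfl⟩)]
      · intro a _ hab
        rw [cnt_snoc', if_neg (fun h => hab ((snoc_suffix _ _ _ _).1 h).2)]
        simp
      · simp
    linarith
  · intro w _ hw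
    have h1 : ¬ List.ofFn w <:+ t ++ List.ofFn w0 := fun h => hw ((suffix_ofFn _ _ _).1 h)
    rw [cntPred_snoc', cnt_eq', if_neg h1]
    simp_rw [cnt_snoc', snoc_suffix]
    simp [h1]
  · simp

noncomputable def Spot (D k : ℕ) (th : (Fin k → Fin D) → Fin D → ℝ) (z : List (Fin D)) : ℝ :=
  ∑ w : Fin k → Fin D, ∑ a, (cnt (List.ofFn w ++ [a]) z : ℝ) * Real.log (th w a)

lemma Spot_step {D k : ℕ} (th : (Fin k → Fin D) → Fin D → ℝ) (t : List (Fin D))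
    (w0 : Fin k → Fin D) (b : Fin D) :
    Spot D k th ((t ++ List.ofFn w0) ++ [b]) = Spot D k th (t ++ List.ofFn w0)
      + Real.log (th w0 b) := by
  unfold Spot
  rw [← sub_eq_iff_eq_add', ← Finset.sum_sub_distrib, Finset.sum_eq_single w0]
  · have h1 : List.ofFn w0 <:+ t ++ List.ofFn w0 := List.suffix_append _ _
    rw [← Finset.sum_sub_distrib, Finset.sum_eq_single b]
    · rw [cnt_snoc', if_pos ((snoc_suffix _ _ _ _).2 ⟨h1, rfl⟩)]
      push_cast; ring
    · intro a _ hab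
      rw [cnt_snoc', if_neg (fun h => hab ((snoc_suffix _ _ _ _).1 h).2)]
      simp
    · simp
  · intro w _ hw
    have h1 : ¬ List.ofFn w <:+ t ++ List.ofFn w0 := fun h => hw ((suffix_ofFn _ _ _).1 h)
    simp_rw [cnt_snoc', snoc_suffix]
    simp [h1]
  · simp

lemma multinomial_bound {D : ℕ} (th : Fin D → ℝ) (hpos : ∀ a, 0 < th a) (hsum : ∑ a, th a ≤ 1)
    (c : Fin D → ℕ) :
    Real.log ((∑ a, c a).factorial) + ∑ a, (c a : ℝ) * Real.log (th a)
      ≤ ∑ a, Real.log ((c a).factorial) := by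
  have h1 := Finset.sum_pow_eq_sum_piAntidiag (Finset.univ : Finset (Fin D)) th (∑ a, c a)
  have h2 : (Nat.multinomial Finset.univ c : ℝ) * ∏ a, th a ^ c a ≤ 1 := by
    have h3 : (∑ a, th a) ^ (∑ a, c a) ≤ 1 :=
      pow_le_one₀ (Finset.sum_nonneg fun a _ => (hpos a).le) hsum
    rw [h1] at h3
    refine le_trans ?_ h3
    refine Finset.single_le_sum
      (f := fun k : Fin D → ℕ => (Nat.multinomial Finset.univ k : ℝ) * ∏ a, th a ^ k a) ?_ ?_
    · intro k _
      have : 0 ≤ ∏ a, th a ^ k a := Finset.prod_nonneg fun a _ => pow_nonneg (hpos a).le _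
      positivity
    · simp [Finset.mem_piAntidiag]
  have h4 : (∏ a, ((c a).factorial : ℝ)) * Nat.multinomial Finset.univ c = (∑ a, c a).factorial := by
    exact_mod_cast Nat.multinomial_spec (Finset.univ : Finset (Fin D)) c
  have hp : 0 < ∏ a, th a ^ c a := Finset.prod_pos fun a _ => pow_pos (hpos a) _
  have h5 : ((∑ a, c a).factorial : ℝ) * ∏ a, th a ^ c a ≤ ∏ a, ((c a).factorial : ℝ) := by
    rw [← h4, mul_assoc]
    exact mul_le_of_le_one_right (Finset.prod_nonneg fun _ _ => by positivity) h2
  have h6 := Real.log_le_log (by positivity) h5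
  rw [Real.log_mul (by positivity) hp.ne', Real.log_prod (fun a _ => (pow_pos (hpos a) _).ne'),
    Real.log_prod (fun a _ => by positivity)] at h6
  simpa [Real.log_pow] using h6

lemma pref_split {D : ℕ} (x : ℕ → Fin D) (m k : ℕ) :
    pref x (m + k) = pref x m ++ List.ofFn (fun i : Fin k => x (m + i)) := by
  rw [← pref_drop]
  have : pref x m = (pref x (m + k)).take m := by
    simp [pref, ← List.map_take, List.take_range]
  rw [this, List.take_append_drop]

lemma B_step {D : ℕ} (hD : 2 ≤ D) (y : List (Fin D)) (x : ℕ → Fin D) (m k : ℕ) (e : ℝ)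
    (he : e ≤ Real.log (BpredPre D y (pref x (m + k)) (x (m + k)) k)) :
    - Real.log (BpredPre D y (pref x (m + k)) (x (m + k)) (k + 1))
      ≤ Lpot D k e (y ++ pref x (m + k + 1)) - Lpot D k e (y ++ pref x (m + k)) := by
  have h1 : y ++ pref x (m + k) = (y ++ pref x m) ++ List.ofFn (fun i : Fin k => x (m + i)) := by
    rw [pref_split, List.append_assoc]
  have h2 : y ++ pref x (m + k + 1) = (y ++ pref x (m + k)) ++ [x (m + k)] := by
    rw [pref_succ, List.append_assoc]
  rw [h2]
  conv_rhs => rw [h1]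
  rw [Lpot_step, ← h1]
  have hB' := Bpre_pos hD y (pref x (m + k)) (x (m + k)) k
  conv_lhs => unfold BpredPre
  rw [if_pos (by rw [pref_length]; omega), pref_length, Nat.add_sub_cancel, pref_drop]
  set B' := BpredPre D y (pref x (m + k)) (x (m + k)) k
  set c := cnt (List.ofFn (fun i : Fin k => x (m + i)) ++ [x (m + k)]) (y ++ pref x (m + k))
  set N := cntPred (List.ofFn (fun i : Fin k => x (m + i))) (y ++ pref x (m + k))
  rw [Real.log_div (by positivity) (by positivity)]
  have : ell e (c + 1) - ell e c ≤ Real.log (c + B') := by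
    rcases c with _ | c
    · simp [ell]; exact he
    · simp only [ell, Nat.factorial_succ]
      push_cast
      rw [Real.log_mul (by positivity) (by positivity)]
      have : Real.log (c + 1) ≤ Real.log (c + 1 + B') := Real.log_le_log (by positivity) (by linarith)
      linarith
  linarith

lemma ell_upper (e : ℝ) (he : e ≤ 0) (c T : ℕ) (hc : c ≤ T) :
    ell e c ≤ -e + Real.log (T.factorial) := by
  have h0 : 0 ≤ Real.log (T.factorial) :=
    Real.log_nonneg (by exact_mod_cast Nat.one_le_iff_ne_zero.2 (Nat.factorial_ne_zero T))
  rcases c with _ | c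
  · simp [ell]; exact h0
  · simp only [ell]
    have : Real.log (c.factorial) ≤ Real.log (T.factorial) :=
      Real.log_le_log (by positivity) (by exact_mod_cast Nat.factorial_le (by omega))
    linarith

lemma ell_lower (e : ℝ) (he : e ≤ 0) (c : ℕ) (M : ℝ) (hM : 1 ≤ M) (hc : (c : ℝ) ≤ M) :
    Real.log (c.factorial) - Real.log M ≤ ell e c := by
  have h0 : 0 ≤ Real.log M := Real.log_nonneg hM
  rcases c with _ | c
  · simp [ell]; linarith
  · simp only [ell, Nat.factorial_succ]
    push_cast at hc ⊢
    rw [Real.log_mul (by positivity) (by positivity)]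
    have : Real.log (c + 1) ≤ Real.log M := Real.log_le_log (by positivity) hc
    linarith

lemma Lpot_lower {D k : ℕ} (e : ℝ) (he : e ≤ 0) (z : List (Fin D)) (T : ℕ) (hT : z.length + 1 ≤ T) :
    - Lpot D k e z ≤ (D : ℝ) ^ k * D * (-e + Real.log (T.factorial)) := by
  unfold Lpot
  rw [← Finset.sum_neg_distrib]
  have : ∀ w ∈ (Finset.univ : Finset (Fin k → Fin D)), -(Real.log ((cntPred (List.ofFn w) z).factorial)
    - ∑ a, ell e (cnt (List.ofFn w ++ [a]) z)) ≤ D * (-e + Real.log (T.factorial)) := by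
    intro w _
    have h0 : 0 ≤ Real.log ((cntPred (List.ofFn w) z).factorial) :=
      Real.log_nonneg (by exact_mod_cast Nat.one_le_iff_ne_zero.2 (Nat.factorial_ne_zero _))
    have h1 : ∑ a, ell e (cnt (List.ofFn w ++ [a]) z) ≤ ∑ a : Fin D, (-e + Real.log (T.factorial)) :=
      Finset.sum_le_sum fun a _ => ell_upper e he _ _ ((cnt_le' _ _).trans hT)
    simp only [Finset.sum_const, Finset.card_univ, Fintype.card_fin, nsmul_eq_mul] at h1
    linarith
  refine (Finset.sum_le_sum this).trans (le_of_eq ?_)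
  simp
  ring

lemma Lpot_upper {D k : ℕ} (e : ℝ) (he : e ≤ 0) (z : List (Fin D)) (M : ℝ)
    (hM : (z.length : ℝ) + 1 ≤ M) (th : (Fin k → Fin D) → Fin D → ℝ)
    (hpos : ∀ w a, 0 < th w a) (hsum : ∀ w, ∑ a, th w a ≤ 1) :
    Lpot D k e z ≤ (D : ℝ) ^ k * D * Real.log M - Spot D k th z := by
  have hM1 : 1 ≤ M := by
    have : (0:ℝ) ≤ z.length := by positivity
    linarith
  unfold Lpot Spot
  have : ∀ w ∈ (Finset.univ : Finset (Fin k → Fin D)), (Real.log ((cntPred (List.ofFn w) z).factorial)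
    - ∑ a, ell e (cnt (List.ofFn w ++ [a]) z)) ≤ D * Real.log M
      - ∑ a, (cnt (List.ofFn w ++ [a]) z : ℝ) * Real.log (th w a) := by
    intro w _
    have h0 := multinomial_bound (th w) (hpos w) (hsum w) (fun a => cnt (List.ofFn w ++ [a]) z)
    rw [← cntPred_sum] at h0
    have h1 : ∑ a, (Real.log ((cnt (List.ofFn w ++ [a]) z).factorial) - Real.log M)
        ≤ ∑ a, ell e (cnt (List.ofFn w ++ [a]) z) :=
      Finset.sum_le_sum fun a _ => ell_lower e he _ M hM1 (by
        have : (cnt (List.ofFn w ++ [a]) z : ℝ) ≤ (z.length + 1 : ℕ) := by exact_mod_cast cnt_le' _ _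
        push_cast at this
        linarith)
    rw [Finset.sum_sub_distrib] at h1
    simp only [Finset.sum_const, Finset.card_univ, Fintype.card_fin, nsmul_eq_mul] at h1
    linarith
  refine (Finset.sum_le_sum this).trans (le_of_eq ?_)
  rw [Finset.sum_sub_distrib]
  simp
  ring

lemma Spot_abs {D k : ℕ} (th : (Fin k → Fin D) → Fin D → ℝ) (z : List (Fin D)) :
    - Spot D k th z ≤ ∑ w : Fin k → Fin D, ∑ a, ((z.length : ℝ) + 1) * |Real.log (th w a)| := by
  unfold Spot
  simp_rw [← Finset.sum_neg_distrib]
  refine Finset.sum_le_sum fun w _ => Finset.sum_le_sum fun a _ => ?_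
  rw [← mul_neg]
  have : (cnt (List.ofFn w ++ [a]) z : ℝ) ≤ (z.length + 1 : ℕ) := by exact_mod_cast cnt_le' _ _
  push_cast at this
  calc _ ≤ (cnt (List.ofFn w ++ [a]) z : ℝ) * |Real.log (th w a)| :=
        mul_le_mul_of_nonneg_left (neg_le_abs _) (by positivity)
    _ ≤ _ := mul_le_mul_of_nonneg_right this (abs_nonneg _)

lemma B_sum {D : ℕ} (hD : 2 ≤ D) (y : List (Fin D)) (k : ℕ) (th : (Fin k → Fin D) → Fin D → ℝ)
    (hpos : ∀ w a, 0 < th w a) (hsum : ∀ w, ∑ a, th w a ≤ 1) :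
    ∃ A K : ℝ, ∀ (N : ℕ) (x : ℕ → Fin D),
      ∑ m ∈ Finset.range N, - Real.log (BpredPre D y (pref x (m + 1 + k)) (x (m + 1 + k)) (k + 1))
      ≤ A + K * Real.log (y.length + N + k + 3)
        + ∑ m ∈ Finset.range N, - Real.log (th (fun i => x (m + 1 + i)) (x (m + 1 + k))) := by
  refine ⟨(D : ℝ) ^ k * D * (Real.log D + Real.log ((y.length + k + 2).factorial)) +
    ∑ w : Fin k → Fin D, ∑ a, ((y.length + k + 1 : ℝ) + 1) * |Real.log (th w a)|,
    (D : ℝ) ^ k * D * (k + 1), fun N x => ?_⟩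
  set M : ℝ := y.length + N + k + 3 with hM
  have hM1 : 1 ≤ M := by
    have : (0:ℝ) ≤ y.length + N + k := by positivity
    linarith
  have hD0 : (1:ℝ) ≤ D := by exact_mod_cast (by omega : 1 ≤ D)
  set e : ℝ := -(Real.log D + k * Real.log M) with he
  have he0 : e ≤ 0 := by
    have := Real.log_nonneg hD0
    have := Real.log_nonneg hM1
    rw [he, neg_nonpos]; positivity
  have step : ∀ n ≤ N, ∑ m ∈ Finset.range n,
      - Real.log (BpredPre D y (pref x (m + 1 + k)) (x (m + 1 + k)) (k + 1))
      ≤ Lpot D k e (y ++ pref x (n + 1 + k)) - Lpot D k e (y ++ pref x (0 + 1 + k)) := by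
    intro n hn
    induction n with
    | zero => simp
    | succ n ih =>
      rw [Finset.sum_range_succ]
      have h1 := ih (by omega)
      have hl : e ≤ Real.log (BpredPre D y (pref x (n + 1 + k)) (x (n + 1 + k)) k) := by
        have hg := Bpre_ge hD y (pref x (n + 1 + k)) (x (n + 1 + k)) M (by
          rw [pref_length, hM]; push_cast
          have : (n : ℝ) ≤ N := by exact_mod_cast (by omega : n ≤ N)
          linarith) k
        have := Real.log_le_log (by positivity) hg
        rw [one_div, Real.log_inv, Real.log_mul (by positivity) (by positivity), Real.log_pow] at this
        exact this
      have h2 := B_step hD y x (n + 1) k e hl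
      have : n + 1 + 1 + k = n + 1 + k + 1 := by ring
      rw [this]
      linarith
  have sp : ∀ n, Spot D k th (y ++ pref x (n + 1 + k)) = Spot D k th (y ++ pref x (0 + 1 + k)) +
      ∑ m ∈ Finset.range n, Real.log (th (fun i => x (m + 1 + i)) (x (m + 1 + k))) := by
    intro n
    induction n with
    | zero => simp
    | succ n ih =>
      have h1 : y ++ pref x (n + 1 + 1 + k) = ((y ++ pref x (n + 1)) ++
          List.ofFn (fun i : Fin k => x (n + 1 + i))) ++ [x (n + 1 + k)] := by
        rw [show n + 1 + 1 + k = n + 1 + k + 1 by ring, pref_succ, pref_split]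
        simp
      rw [h1, Spot_step, Finset.sum_range_succ, ← add_assoc, ← ih, pref_split x (n + 1) k, List.append_assoc]
  have h1 := step N le_rfl
  have h2 := Lpot_upper e he0 (y ++ pref x (N + 1 + k)) M (by
    rw [List.length_append, pref_length, hM]; push_cast; linarith) th hpos hsum
  have h3 := Lpot_lower (k := k) e he0 (y ++ pref x (0 + 1 + k)) (y.length + k + 2) (by
    rw [List.length_append, pref_length]; omega)
  have h4 := sp N
  have h5 := Spot_abs th (y ++ pref x (0 + 1 + k))
  rw [List.length_append, pref_length] at h5
  have h6 : ((y.length + (0 + 1 + k) : ℕ) : ℝ) = y.length + k + 1 := by push_cast; ring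
  rw [h6] at h5
  rw [Finset.sum_neg_distrib (fun m => Real.log (th (fun i => x (m + 1 + i)) (x (m + 1 + k))))]
  have h7 : (D : ℝ) ^ k * D * (-e + Real.log ((y.length + k + 2).factorial)) =
    (D : ℝ) ^ k * D * (Real.log D + Real.log ((y.length + k + 2).factorial)) +
    (D : ℝ) ^ k * D * k * Real.log M := by rw [he]; ring
  rw [h7] at h3
  linarith

lemma Ppart_nonneg {D : ℕ} (hD : 2 ≤ D) (y : List (Fin D)) (p : ℕ → ℝ)
    (hp : ∀ n, p n ∈ Set.Ioo (0 : ℝ) 1) (x : ℕ → Fin D) (n : ℕ) (k : ℤ) :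
    0 ≤ PpartPre D p y x n k := by
  induction n generalizing k with
  | zero => simp [PpartPre]
  | succ n ih =>
    rcases n with _ | n
    · have h1 := (hp 0).1
      have h2 : 0 ≤ 1 - p 0 := by linarith [(hp 0).2]
      have h3 := (Bpre_pos hD y [] (x 0) 0).le
      have h4 := (Bpre_pos hD y [] (x 0) 1).le
      simp only [PpartPre]
      split_ifs <;> positivity
    · have h1 := (hp (n+1)).1
      have h2 : 0 ≤ 1 - p (n+1) := by linarith [(hp (n+1)).2]
      have h3 := (Bpre_pos hD y (pref x (n+1)) (x (n+1)) (k+1).toNat).le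
      have h4 := ih k
      have h5 := ih (k - 1)
      simp only [PpartPre]
      split_ifs <;> positivity

lemma Ppart_init {D : ℕ} (hD : 2 ≤ D) (y : List (Fin D)) (p : ℕ → ℝ)
    (hp : ∀ n, p n ∈ Set.Ioo (0 : ℝ) 1) (k : ℕ) :
    ∃ c : ℝ, 0 < c ∧ ∀ x : ℕ → Fin D, c ≤ PpartPre D p y x (k + 1) k := by
  have hD0 : (0:ℝ) < D := by positivity
  induction k with
  | zero =>
    have h2 : 0 < 1 - p 0 := by linarith [(hp 0).2]
    refine ⟨(1 - p 0) * (1 / (D * ((y.length : ℝ) + 2) ^ 1)), by positivity, fun x => ?_⟩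
    have := Bpre_ge hD y [] (x 0) (y.length + 2) (by simp) 1
    simp only [PpartPre]
    simp only [Nat.cast_zero, zero_add, Int.reduceNeg, zero_eq_neg, one_ne_zero, if_false, if_true]
    gcongr
  | succ k ih =>
    obtain ⟨c, hc, h⟩ := ih
    have h2 : 0 < 1 - p (k+1) := by linarith [(hp (k+1)).2]
    refine ⟨((1 - p (k+1)) * c) * (1 / (D * ((y.length : ℝ) + k + 3) ^ (k+2))), by positivity,
      fun x => ?_⟩
    have h3 := Bpre_ge hD y (pref x (k+1)) (x (k+1)) (y.length + k + 3)
      (by rw [pref_length]; push_cast; linarith) (k+2)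
    simp only [PpartPre]
    rw [if_pos (by constructor <;> push_cast <;> omega)]
    have e1 : (((k + 1 : ℕ) : ℤ) + 1).toNat = k + 2 := by omega
    have e2 : ((k + 1 : ℕ) : ℤ) - 1 = k := by push_cast; ring
    rw [e1, e2]
    have h4 := Ppart_nonneg hD y p hp x (k+1) ((k+1 : ℕ) : ℤ)
    have h5 := h x
    have h6 := (hp (k+1)).1
    have h7 : (1 - p (k+1)) * c ≤ p (k+1) * PpartPre D p y x (k+1) ((k+1 : ℕ) : ℤ)
      + (1 - p (k+1)) * PpartPre D p y x (k+1) k := by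
      have : 0 ≤ p (k+1) * PpartPre D p y x (k+1) ((k+1 : ℕ) : ℤ) := by positivity
      nlinarith
    exact mul_le_mul h7 h3 (by positivity) (le_trans (by positivity) h7)

lemma Ppart_lower {D : ℕ} (hD : 2 ≤ D) (y : List (Fin D)) (p : ℕ → ℝ)
    (hp : ∀ n, p n ∈ Set.Ioo (0 : ℝ) 1) (x : ℕ → Fin D) (k : ℕ) (N : ℕ) :
    PpartPre D p y x (k + 1) k * (∏ i ∈ Finset.range (N + k + 1), p i) *
      ∏ m ∈ Finset.range N, BpredPre D y (pref x (m + 1 + k)) (x (m + 1 + k)) (k + 1)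
      ≤ PpartPre D p y x (N + k + 1) k := by
  induction N with
  | zero =>
    simp only [zero_add, Finset.range_zero, Finset.prod_empty, mul_one]
    apply mul_le_of_le_one_right (Ppart_nonneg hD y p hp x _ _)
    exact Finset.prod_le_one (fun i _ => (hp i).1.le) (fun i _ => (hp i).2.le)
  | succ N ih =>
    rw [show N + 1 + k + 1 = (N + k) + 2 by ring]
    have h0 := Ppart_nonneg hD y p hp x (N + k + 1) (k - 1)
    have h1 := (hp (N + k + 1)).1
    have h2 : 0 < 1 - p (N + k +1) := by linarith [(hp (N + k + 1)).2]
    have h3 := Bpre_pos hD y (pref x (N + k + 1)) (x (N + k + 1)) (k + 1)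
    rw [PpartPre, if_pos (by constructor <;> push_cast <;> omega),
      show ((k : ℤ) + 1).toNat = k + 1 by omega, Finset.prod_range_succ _ (N + k + 1),
      Finset.prod_range_succ _ N, show N + 1 + k = N + k + 1 by ring]
    calc _ = p (N + k + 1) * (PpartPre D p y x (k + 1) k * (∏ i ∈ Finset.range (N + k + 1), p i) *
      ∏ m ∈ Finset.range N, BpredPre D y (pref x (m + 1 + k)) (x (m + 1 + k)) (k + 1))
        * BpredPre D y (pref x (N + k + 1)) (x (N + k + 1)) (k + 1) := by ring
      _ ≤ p (N + k + 1) * PpartPre D p y x (N + k + 1) k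
        * BpredPre D y (pref x (N + k + 1)) (x (N + k + 1)) (k + 1) := by gcongr
      _ ≤ _ := by
        gcongr
        have : 0 ≤ (1 - p (N + k + 1)) * PpartPre D p y x (N + k + 1) (k - 1) := by positivity
        linarith

lemma sw_ge {D : ℕ} (hD : 2 ≤ D) (y : List (Fin D)) (p : ℕ → ℝ)
    (hp : ∀ n, p n ∈ Set.Ioo (0 : ℝ) 1) (x : ℕ → Fin D) (k N : ℕ) :
    PpartPre D p y x (N + k + 1) k ≤ swPre D p y x (N + k + 1) := by
  unfold swPre
  have := Finset.single_le_sum (f := fun kk : ℕ => PpartPre D p y x (N + k + 1) ((kk : ℤ) - 1))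
    (s := Finset.range (N + k + 1 + 1)) (fun i _ => Ppart_nonneg hD y p hp x _ _)
    (a := k + 1) (by simp)
  simpa using this

lemma sw_pos {D : ℕ} (hD : 2 ≤ D) (y : List (Fin D)) (p : ℕ → ℝ)
    (hp : ∀ n, p n ∈ Set.Ioo (0 : ℝ) 1) (x : ℕ → Fin D) (n : ℕ) :
    0 < swPre D p y x (n + 1) := by
  obtain ⟨c, hc, h⟩ := Ppart_init hD y p hp n
  have := sw_ge hD y p hp x n 0
  simp only [zero_add] at this
  linarith [h x]

lemma pointwise {D : ℕ} (hD : 2 ≤ D) (y : List (Fin D)) (p : ℕ → ℝ)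
    (hp : ∀ n, p n ∈ Set.Ioo (0 : ℝ) 1)
    (hprod : ∃ L, 0 < L ∧ Tendsto (fun N : ℕ => ∏ i ∈ Finset.range N, p i) atTop (𝓝 L))
    (k : ℕ) (th : (Fin k → Fin D) → Fin D → ℝ)
    (hpos : ∀ w a, 0 < th w a) (hsum : ∀ w, ∑ a, th w a ≤ 1) :
    ∃ A K : ℝ, ∀ (N : ℕ) (x : ℕ → Fin D),
      - Real.log (swPre D p y x (N + k + 1)) ≤ A + K * Real.log (y.length + N + k + 3)
        + ∑ m ∈ Finset.range N, - Real.log (th (fun i => x (m + 1 + i)) (x (m + 1 + k))) := by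
  obtain ⟨A, K, hAK⟩ := B_sum hD y k th hpos hsum
  obtain ⟨L, hL, hlim⟩ := hprod
  obtain ⟨c, hc, hcx⟩ := Ppart_init hD y p hp k
  have hLle : ∀ N, L ≤ ∏ i ∈ Finset.range N, p i := by
    intro N
    refine (antitone_nat_of_succ_le fun n => ?_).le_of_tendsto hlim N
    rw [Finset.prod_range_succ]
    exact mul_le_of_le_one_right (Finset.prod_nonneg fun i _ => (hp i).1.le) (hp n).2.le
  refine ⟨A - Real.log c - Real.log L, K, fun N x => ?_⟩
  have h1 := hAK N x
  have hB : 0 < ∏ m ∈ Finset.range N, BpredPre D y (pref x (m + 1 + k)) (x (m + 1 + k)) (k + 1) :=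
    Finset.prod_pos fun m _ => Bpre_pos hD _ _ _ _
  have h2 : c * L * ∏ m ∈ Finset.range N, BpredPre D y (pref x (m + 1 + k)) (x (m + 1 + k)) (k + 1)
      ≤ swPre D p y x (N + k + 1) := by
    refine le_trans ?_ ((Ppart_lower hD y p hp x k N).trans (sw_ge hD y p hp x k N))
    have := hcx x
    have := hLle (N + k + 1)
    have := Ppart_nonneg hD y p hp x (k + 1) k
    gcongr
  have h3 := Real.log_le_log (by positivity) h2
  rw [Real.log_mul (by positivity) hB.ne', Real.log_mul hc.ne' hL.ne',
    Real.log_prod (fun m _ => (Bpre_pos hD _ _ _ _).ne')] at h3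
  rw [Finset.sum_neg_distrib] at h1
  linarith

lemma Ppart_congr {D : ℕ} (y : List (Fin D)) (p : ℕ → ℝ) (x x' : ℕ → Fin D) (n : ℕ)
    (h : ∀ i < n, x i = x' i) (k : ℤ) : PpartPre D p y x n k = PpartPre D p y x' n k := by
  induction n generalizing k with
  | zero => simp [PpartPre]
  | succ n ih =>
    have ih' := ih (fun i hi => h i (by omega))
    rcases n with _ | n
    · simp only [PpartPre, h 0 (by omega)]
    · have : pref x (n+1) = pref x' (n+1) := by
        unfold pref
        apply List.map_congr_left
        intro i hi
        exact h i (by have := List.mem_range.1 hi; omega)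
      simp only [PpartPre, ih', this, h (n+1) (by omega)]

lemma sw_congr {D : ℕ} (y : List (Fin D)) (p : ℕ → ℝ) (x x' : ℕ → Fin D) (n : ℕ)
    (h : ∀ i < n, x i = x' i) : swPre D p y x n = swPre D p y x' n := by
  unfold swPre
  exact Finset.sum_congr rfl fun k _ => Ppart_congr y p x x' n h _

lemma Ppart_top {D : ℕ} (y : List (Fin D)) (p : ℕ → ℝ) (x : ℕ → Fin D) (n : ℕ) (k : ℤ)
    (hk : k < -1 ∨ n ≤ k) :
    PpartPre D p y x n k = 0 := by
  rcases n with _ | _ | n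
  · simp [PpartPre]
  · simp only [PpartPre]
    rw [if_neg (by push_cast at hk; omega), if_neg (by push_cast at hk; omega)]
  · simp only [PpartPre]
    rw [if_neg (by push_cast at hk; omega)]

lemma sw_sum_step {D : ℕ} (hD : 2 ≤ D) (y : List (Fin D)) (p : ℕ → ℝ) (x : ℕ → Fin D) (n : ℕ) :
    ∑ a, swPre D p y (Function.update x (n + 1) a) (n + 2) = swPre D p y x (n + 1) := by
  have key : ∀ (a : Fin D), ∀ kk ∈ Finset.range (n + 2 + 1),
      PpartPre D p y (Function.update x (n + 1) a) (n + 2) ((kk : ℤ) - 1)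
      = (p (n + 1) * PpartPre D p y x (n + 1) ((kk : ℤ) - 1) +
        (1 - p (n + 1)) * PpartPre D p y x (n + 1) ((kk : ℤ) - 1 - 1)) *
        BpredPre D y (pref x (n + 1)) a kk := by
    intro a kk hkk
    have hkk' := Finset.mem_range.1 hkk
    have hag : ∀ i < n + 1, Function.update x (n + 1) a i = x i := fun i hi => by
      rw [Function.update_of_ne (by omega)]
    have hpr : pref (Function.update x (n + 1) a) (n + 1) = pref x (n + 1) := by
      unfold pref
      apply List.map_congr_left
      intro i hi
      exact hag i (List.mem_range.1 hi)
    rw [PpartPre, if_pos (by omega), Ppart_congr y p _ x (n + 1) hag, Ppart_congr y p _ x (n + 1) hag,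
      hpr, Function.update_self]
    congr 1
    congr 1
    omega
  unfold swPre
  rw [Finset.sum_congr rfl fun a _ => Finset.sum_congr rfl (key a), Finset.sum_comm]
  simp_rw [← Finset.mul_sum, Bpre_sum hD, mul_one]
  rw [Finset.sum_add_distrib, ← Finset.mul_sum, ← Finset.mul_sum, Finset.sum_range_succ,
    Finset.sum_range_succ' (fun kk : ℕ => PpartPre D p y x (n + 1) ((kk : ℤ) - 1 - 1)),
    Ppart_top y p x (n + 1) (((n + 2 : ℕ) : ℤ) - 1) (by right; push_cast; omega),
    Ppart_top y p x (n + 1) (((0 : ℕ) : ℤ) - 1 - 1) (by left; norm_num)]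
  have : ∀ kk : ℕ, (((kk + 1 : ℕ) : ℤ) - 1 - 1) = (kk : ℤ) - 1 := by intro kk; push_cast; ring
  simp_rw [this]
  ring

/-- extension of a finite word -/
def ext0 {D : ℕ} (hD : 2 ≤ D) {n : ℕ} (u : Fin n → Fin D) : ℕ → Fin D :=
  fun i => if h : i < n then u ⟨i, h⟩ else ⟨0, by omega⟩

lemma ext0_lt {D : ℕ} (hD : 2 ≤ D) {n : ℕ} (u : Fin n → Fin D) (i : ℕ) (h : i < n) :
    ext0 hD u i = u ⟨i, h⟩ := by simp [ext0, h]

lemma sum_snoc {D n : ℕ} (F : (Fin (n + 1) → Fin D) → ℝ) :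
    ∑ u, F u = ∑ w : Fin n → Fin D, ∑ a, F (Fin.snoc w a) := by
  rw [← (Fin.snocEquiv (fun _ : Fin (n+1) => Fin D)).sum_comp, Fintype.sum_prod_type,
    Finset.sum_comm]
  rfl

lemma sw_sum {D : ℕ} (hD : 2 ≤ D) (y : List (Fin D)) (p : ℕ → ℝ) (n : ℕ) :
    ∑ u : Fin (n + 1) → Fin D, swPre D p y (ext0 hD u) (n + 1) = 1 := by
  induction n with
  | zero =>
    rw [sum_snoc]
    have : ∀ (w : Fin 0 → Fin D) (a : Fin D),
      swPre D p y (ext0 hD (Fin.snoc w a : Fin 1 → Fin D)) (0 + 1) = p 0 * BpredPre D y [] a 0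
        + (1 - p 0) * BpredPre D y [] a 1 := by
      intro w a
      have : ext0 hD (Fin.snoc w a : Fin 1 → Fin D) 0 = a := by
        rw [ext0_lt hD _ 0 (by omega)]; rfl
      simp [swPre, Finset.sum_range_succ, PpartPre, this]
    simp_rw [this, Finset.sum_add_distrib, ← Finset.mul_sum, Bpre_sum hD]
    simp
  | succ n ih =>
    rw [sum_snoc, ← ih]
    apply Finset.sum_congr rfl
    intro w _
    rw [← sw_sum_step hD]
    apply Finset.sum_congr rfl
    intro a _
    apply sw_congr
    intro i hi
    rw [ext0_lt hD _ i hi]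
    by_cases h : i = n + 1
    · subst h
      rw [Function.update_self]
      exact Fin.snoc_last (α := fun _ => Fin D) a w
    · rw [Function.update_of_ne h, ext0_lt hD _ i (by omega)]
      exact Fin.snoc_castSucc (α := fun _ => Fin D) a w ⟨i, by omega⟩

/-- projection to the first `n` coordinates -/
def prj (D n : ℕ) (ω : Omega D) : Fin n → Fin D := fun i => ω ((i : ℤ) + 1)

lemma prj_meas (D n : ℕ) : Measurable (prj D n) := by
  unfold prj
  fun_prop

noncomputable def qq {D : ℕ} (Q : Measure (Omega D)) (n : ℕ) (u : Fin n → Fin D) : ℝ :=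
  Q.real (prj D n ⁻¹' {u})

lemma Qstr_eq {D : ℕ} (Q : Measure (Omega D)) (n : ℕ) (ω : Omega D) :
    Qstr D Q (path D ω) n = qq Q n (prj D n ω) := by
  unfold Qstr qq Measure.real
  congr 2
  ext ω'
  simp only [cylSet, path, Set.mem_ofPred_eq, Set.mem_preimage, Set.mem_singleton_iff]
  constructor
  · intro h
    funext i
    exact h i i.2
  · intro h i hi
    exact congrFun h ⟨i, hi⟩

lemma int_prj {D : ℕ} (Q : Measure (Omega D)) [IsProbabilityMeasure Q] (n : ℕ)
    (F : (Fin n → Fin D) → ℝ) :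
    ∫ ω, F (prj D n ω) ∂Q = ∑ u, qq Q n u * F u := by
  have : IsProbabilityMeasure (Q.map (prj D n)) :=
    Measure.isProbabilityMeasure_map (prj_meas D n).aemeasurable
  have h := integral_map (μ := Q) (prj_meas D n).aemeasurable (f := F)
    (Measurable.of_discrete).aestronglyMeasurable
  rw [← h, integral_fintype (Integrable.of_finite)]
  apply Finset.sum_congr rfl
  intro u _
  rw [smul_eq_mul, map_measureReal_apply (prj_meas D n) (measurableSet_singleton u)]
  rfl

lemma integrable_prj {D : ℕ} (Q : Measure (Omega D)) [IsProbabilityMeasure Q] (n : ℕ)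
    (F : (Fin n → Fin D) → ℝ) : Integrable (fun ω => F (prj D n ω)) Q := by
  have : IsProbabilityMeasure (Q.map (prj D n)) :=
    Measure.isProbabilityMeasure_map (prj_meas D n).aemeasurable
  exact (Integrable.of_finite (μ := Q.map (prj D n)) (f := F)).comp_measurable (prj_meas D n)

lemma qq_nonneg {D : ℕ} (Q : Measure (Omega D)) (n : ℕ) (u : Fin n → Fin D) : 0 ≤ qq Q n u :=
  measureReal_nonneg

lemma qq_sum {D : ℕ} (Q : Measure (Omega D)) [IsProbabilityMeasure Q] (n : ℕ) :
    ∑ u, qq Q n u = 1 := by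
  have := int_prj Q n (fun _ => 1)
  simpa using this.symm

lemma qq_marg {D : ℕ} (Q : Measure (Omega D)) [IsProbabilityMeasure Q] (n : ℕ) (w : Fin n → Fin D) :
    ∑ a, qq Q (n + 1) (Fin.snoc w a) = qq Q n w := by
  have h1 := int_prj Q (n + 1) (fun v => if Fin.init v = w then (1:ℝ) else 0)
  have h2 := int_prj Q n (fun v => if v = w then (1:ℝ) else 0)
  have h3 : ∀ ω, Fin.init (prj D (n+1) ω) = prj D n ω := fun ω => rfl
  simp_rw [h3] at h1
  rw [h1, sum_snoc] at h2
  simp only [Fin.init_snoc] at h2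
  simpa using h2

lemma gibbs {ι : Type*} [Fintype ι] (q r : ι → ℝ) (hq : ∀ i, 0 ≤ q i) (hr : ∀ i, 0 < r i)
    (hs : ∑ i, r i ≤ ∑ i, q i) :
    ∑ i, q i * - Real.log (q i) ≤ ∑ i, q i * - Real.log (r i) := by
  have : ∀ i ∈ Finset.univ, q i * - Real.log (q i) ≤ q i * - Real.log (r i) + (r i - q i) := by
    intro i _
    rcases (hq i).eq_or_lt with h | h
    · rw [← h]; simp; exact (hr i).le
    · have h1 := Real.log_le_sub_one_of_pos (div_pos (hr i) h)
      rw [Real.log_div (hr i).ne' h.ne'] at h1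
      have h2 := mul_le_mul_of_nonneg_left h1 h.le
      have h3 : q i * (r i / q i - 1) = r i - q i := by field_simp
      rw [h3] at h2
      linarith
  have h := Finset.sum_le_sum this
  rw [Finset.sum_add_distrib, Finset.sum_sub_distrib] at h
  linarith

lemma sw_prj {D : ℕ} (hD : 2 ≤ D) (y : List (Fin D)) (p : ℕ → ℝ) (n : ℕ) (ω : Omega D) :
    swPre D p y (path D ω) n = swPre D p y (ext0 hD (prj D n ω)) n := by
  apply sw_congr
  intro i hi
  rw [ext0_lt hD _ i hi]
  rfl

lemma lower_bound {D : ℕ} (hD : 2 ≤ D) (y : List (Fin D)) (p : ℕ → ℝ)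
    (hp : ∀ n, p n ∈ Set.Ioo (0 : ℝ) 1) (Q : Measure (Omega D)) [IsProbabilityMeasure Q] (n : ℕ) :
    ∫ ω, -Real.log (Qstr D Q (path D ω) (n + 1)) ∂Q
      ≤ ∫ ω, -Real.log (swPre D p y (path D ω) (n + 1)) ∂Q := by
  simp_rw [Qstr_eq, sw_prj hD]
  rw [int_prj Q (n+1) (fun u => -Real.log (qq Q (n+1) u)),
    int_prj Q (n+1) (fun u => -Real.log (swPre D p y (ext0 hD u) (n+1)))]
  apply gibbs
  · exact fun u => qq_nonneg Q _ u
  · exact fun u => sw_pos hD y p hp _ n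
  · rw [sw_sum, qq_sum]

/-- smoothed conditional probabilities -/
noncomputable def thq {D : ℕ} (Q : Measure (Omega D)) (d : ℝ) (k : ℕ) (w : Fin k → Fin D)
    (a : Fin D) : ℝ := (1 - d) * (qq Q (k + 1) (Fin.snoc w a) / qq Q k w) + d / D

lemma thq_pos {D : ℕ} (hD : 2 ≤ D) (Q : Measure (Omega D)) (d : ℝ) (hd : 0 < d) (hd1 : d < 1)
    (k : ℕ) (w : Fin k → Fin D) (a : Fin D) : 0 < thq Q d k w a := by
  have h1 := qq_nonneg Q (k+1) (Fin.snoc w a)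
  have h2 := qq_nonneg Q k w
  have h3 : 0 ≤ 1 - d := by linarith
  unfold thq
  positivity

lemma thq_sum {D : ℕ} (hD : 2 ≤ D) (Q : Measure (Omega D)) [IsProbabilityMeasure Q]
    (d : ℝ) (hd1 : d < 1)
    (k : ℕ) (w : Fin k → Fin D) : ∑ a, thq Q d k w a ≤ 1 := by
  have hD0 : (D : ℝ) ≠ 0 := by positivity
  unfold thq
  rw [Finset.sum_add_distrib, ← Finset.mul_sum, ← Finset.sum_div, qq_marg]
  have h1 : qq Q k w / qq Q k w ≤ 1 := div_self_le_one _
  have h2 : ∑ _a : Fin D, d / D = d := by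
    simp; field_simp
  rw [h2]
  nlinarith

lemma thq_ent {D : ℕ} (hD : 2 ≤ D) (Q : Measure (Omega D)) [IsProbabilityMeasure Q]
    (d : ℝ) (hd : 0 < d) (hd1 : d < 1) (k : ℕ) :
    ∫ ω, -Real.log (thq Q d k (fun i => path D ω i) (path D ω k)) ∂Q
      ≤ - Real.log (1 - d) + (∫ ω, -Real.log (Qstr D Q (path D ω) (k + 1)) ∂Q)
        - (∫ ω, -Real.log (Qstr D Q (path D ω) k) ∂Q) := by
  have e1 : ∀ ω : Omega D, thq Q d k (fun i => path D ω i) (path D ω k)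
    = thq Q d k (Fin.init (prj D (k+1) ω)) (prj D (k+1) ω (Fin.last k)) := fun ω => rfl
  have e2 : ∀ ω : Omega D, Qstr D Q (path D ω) k = qq Q k (Fin.init (prj D (k+1) ω)) :=
    fun ω => Qstr_eq Q k ω
  simp_rw [e1, e2, Qstr_eq]
  rw [int_prj Q (k+1) (fun v => -Real.log (thq Q d k (Fin.init v) (v (Fin.last k)))),
    int_prj Q (k+1) (fun v => -Real.log (qq Q (k+1) v)),
    int_prj Q (k+1) (fun v => -Real.log (qq Q k (Fin.init v)))]
  have h0 : - Real.log (1 - d) = ∑ v, qq Q (k+1) v * - Real.log (1 - d) := by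
    rw [← Finset.sum_mul, qq_sum, one_mul]
  rw [h0, ← Finset.sum_add_distrib, ← Finset.sum_sub_distrib]
  apply Finset.sum_le_sum
  intro v _
  rcases (qq_nonneg Q (k+1) v).eq_or_lt with h | h
  · rw [← h]; simp
  · rw [← mul_add, ← mul_sub]
    apply mul_le_mul_of_nonneg_left _ h.le
    have h1 : 0 < qq Q k (Fin.init v) := by
      rw [← qq_marg]
      refine lt_of_lt_of_le h ?_
      have := Finset.single_le_sum (f := fun a => qq Q (k+1) (Fin.snoc (Fin.init v) a : Fin (k+1) → Fin D))
        (fun a _ => qq_nonneg Q _ _) (Finset.mem_univ (v (Fin.last k)))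
      simpa using this
    have h2 : 0 < 1 - d := by linarith
    have h3 : (1 - d) * (qq Q (k+1) v / qq Q k (Fin.init v))
        ≤ thq Q d k (Fin.init v) (v (Fin.last k)) := by
      unfold thq
      rw [Fin.snoc_init_self]
      have : 0 ≤ d / D := by positivity
      linarith
    have h4 := Real.log_le_log (by positivity) h3
    rw [Real.log_mul h2.ne' (by positivity), Real.log_div h.ne' h1.ne'] at h4
    linarith

lemma shift_iter {D : ℕ} (m : ℕ) (ω : Omega D) (i : ℤ) : (shiftT D)^[m] ω i = ω (i + m) := by
  induction m generalizing ω with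
  | zero => simp
  | succ m ih =>
    rw [Function.iterate_succ_apply, ih]
    simp only [shiftT]
    congr 1
    push_cast; ring

lemma thq_shift {D : ℕ} (Q : Measure (Omega D)) [IsProbabilityMeasure Q]
    (hstat : MeasurePreserving (shiftT D) Q Q) (d : ℝ) (k m : ℕ) :
    Integrable (fun ω => -Real.log (thq Q d k (fun i => path D ω (m + i)) (path D ω (m + k)))) Q ∧
    ∫ ω, -Real.log (thq Q d k (fun i => path D ω (m + i)) (path D ω (m + k))) ∂Q =
    ∫ ω, -Real.log (thq Q d k (fun i => path D ω i) (path D ω k)) ∂Q := by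
  set F : Omega D → ℝ := fun ω => -Real.log (thq Q d k (fun i => path D ω i) (path D ω k)) with hF
  have hmp := hstat.iterate m
  have hint : Integrable F Q :=
    integrable_prj Q (k+1) (fun v => -Real.log (thq Q d k (Fin.init v) (v (Fin.last k))))
  have e : (fun ω => -Real.log (thq Q d k (fun i => path D ω (m + i)) (path D ω (m + k))))
      = fun ω => F ((shiftT D)^[m] ω) := by
    funext ω
    have : ∀ i, path D ((shiftT D)^[m] ω) i = path D ω (m + i) := by
      intro i
      simp only [path]
      rw [shift_iter]
      congr 1
      push_cast; ring
    simp only [hF, this]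
  rw [e]
  refine ⟨hmp.integrable_comp_of_integrable hint, ?_⟩
  have := integral_map (μ := Q) hmp.measurable.aemeasurable (f := F)
    (by rw [hmp.map_eq]; exact hint.aestronglyMeasurable)
  rw [hmp.map_eq] at this
  exact this.symm

lemma exists_small (H : ℕ → ℝ) (h : ℝ) (hlim : Tendsto (fun n : ℕ => H n / n) atTop (𝓝 h))
    (η : ℝ) (hη : 0 < η) : ∃ k, H (k + 1) - H k ≤ h + η := by
  by_contra hcon
  push Not at hcon
  have h1 : ∀ n : ℕ, H 0 + n * (h + η) ≤ H n := by
    intro n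
    induction n with
    | zero => simp
    | succ n ih => have := hcon n; push_cast; linarith
  have h2 : Tendsto (fun n : ℕ => H 0 / n + (h + η)) atTop (𝓝 (0 + (h + η))) :=
    (tendsto_const_div_atTop_nhds_zero_nat (H 0)).add tendsto_const_nhds
  have h3 := le_of_tendsto_of_tendsto h2 hlim (by
    filter_upwards [eventually_gt_atTop 0] with n hn
    have hn' : (0:ℝ) < n := by exact_mod_cast hn
    rw [le_div_iff₀ hn', add_mul, div_mul_cancel₀ _ hn'.ne']
    linarith [h1 n])
  linarith

lemma upper_bound {D : ℕ} (hD : 2 ≤ D) (y : List (Fin D)) (p : ℕ → ℝ)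
    (hp : ∀ n, p n ∈ Set.Ioo (0 : ℝ) 1)
    (hprod : ∃ L, 0 < L ∧ Tendsto (fun N : ℕ => ∏ i ∈ Finset.range N, p i) atTop (𝓝 L))
    (Q : Measure (Omega D)) [IsProbabilityMeasure Q]
    (hstat : MeasurePreserving (shiftT D) Q Q) (d : ℝ) (hd : 0 < d) (hd1 : d < 1) (k : ℕ) (C : ℝ)
    (hC : - Real.log (1 - d) + (∫ ω, -Real.log (Qstr D Q (path D ω) (k + 1)) ∂Q)
        - (∫ ω, -Real.log (Qstr D Q (path D ω) k) ∂Q) ≤ C) :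
    ∃ A K : ℝ, ∀ N : ℕ, ∫ ω, -Real.log (swPre D p y (path D ω) (N + k + 1)) ∂Q
      ≤ A + K * Real.log (y.length + N + k + 3) + N * C := by
  obtain ⟨A, K, hAK⟩ := pointwise hD y p hp hprod k (thq Q d k) (thq_pos hD Q d hd hd1 k)
    (thq_sum hD Q d hd1 k)
  refine ⟨A, K, fun N => ?_⟩
  have hi1 : Integrable (fun ω => -Real.log (swPre D p y (path D ω) (N + k + 1))) Q := by
    simp_rw [sw_prj hD]
    exact integrable_prj Q (N+k+1) (fun u => -Real.log (swPre D p y (ext0 hD u) (N+k+1)))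
  have hi2 : Integrable (fun ω => ∑ m ∈ Finset.range N,
      -Real.log (thq Q d k (fun i => path D ω (m + 1 + i)) (path D ω (m + 1 + k)))) Q :=
    integrable_finsetSum _ fun m _ => (thq_shift Q hstat d k (m + 1)).1
  have h1 := integral_mono hi1 ((integrable_const
    (A + K * Real.log (y.length + N + k + 3))).add hi2) (fun ω => hAK N (path D ω))
  refine h1.trans ?_
  simp only [Pi.add_apply]
  rw [integral_add (integrable_const _) hi2, integral_finsetSum _
    fun m _ => (thq_shift Q hstat d k (m + 1)).1]
  simp_rw [fun m => (thq_shift Q hstat d k (m + 1)).2]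
  simp only [integral_const, probReal_univ, one_smul, Finset.sum_const, Finset.card_range, nsmul_eq_mul]
  gcongr
  exact (thq_ent hD Q d hd hd1 k).trans hC

lemma final_lim (A K C J : ℝ) (hJ : -1 ≤ J) :
    Tendsto (fun N : ℕ => (A + K * Real.log (J + N + 3) + N * C) / N) atTop (𝓝 C) := by
  have hlog : Tendsto (fun N : ℕ => Real.log (J + N + 3) / N) atTop (𝓝 0) := by
    have h1 : Tendsto (fun N : ℕ => (J + 3) + (N : ℝ)) atTop atTop :=
      tendsto_atTop_add_const_left _ _ tendsto_natCast_atTop_atTop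
    have h2 : (fun x : ℝ => Real.log x) =o[atTop] (fun x : ℝ => x) := Real.isLittleO_log_id_atTop
    have h3 := (h2.comp_tendsto h1).tendsto_div_nhds_zero
    have h4 : Tendsto (fun N : ℕ => (J + 3) / (N : ℝ) + 1) atTop (𝓝 (0 + 1)) :=
      (tendsto_const_div_atTop_nhds_zero_nat _).add tendsto_const_nhds
    have h5 := h3.mul h4
    rw [zero_mul] at h5
    refine h5.congr' ?_
    filter_upwards [eventually_gt_atTop 0] with N hN
    have hN' : (0:ℝ) < N := by exact_mod_cast hN
    have : (0:ℝ) < J + 3 + N := by linarith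
    simp only [Function.comp]
    rw [show J + N + 3 = J + 3 + N by ring]
    field_simp
  have h := ((tendsto_const_div_atTop_nhds_zero_nat A).add (hlog.const_mul K)).add
    (tendsto_const_nhds (x := C))
  simp only [mul_zero, zero_add] at h
  refine h.congr' ?_
  filter_upwards [eventually_gt_atTop 0] with N hN
  have hN' : (0:ℝ) < N := by exact_mod_cast hN
  field_simp

end helpers

/-- The preadapted switch distribution is weakly universal: for every stationary
probability measure `Q` on `Ω = {1,...,D}^ℤ`,
`lim_{n→∞} (1/n)·E_Q[−log P(X_1^n)] = h_Q`, where `h_Q` is the entropy rate of `Q`. -/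
theorem preadapted_switch_weakly_universal
    (D : ℕ) (hD : 2 ≤ D) (y : List (Fin D))
    (p : ℕ → ℝ) (hp : ∀ n, p n ∈ Set.Ioo (0 : ℝ) 1)
    (hprod : ∃ L, 0 < L ∧ Tendsto (fun N : ℕ => ∏ i ∈ Finset.range N, p i) atTop (𝓝 L))
    (Q : Measure (Omega D)) [IsProbabilityMeasure Q]
    (hstat : MeasurePreserving (shiftT D) Q Q)
    (hQ : ℝ)
    (hent : Tendsto
      (fun n : ℕ => (∫ ω, -Real.log (Qstr D Q (path D ω) n) ∂Q) / n) atTop (𝓝 hQ)) :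
    Tendsto (fun n : ℕ => (∫ ω, -Real.log (swPre D p y (path D ω) n) ∂Q) / n) atTop
      (𝓝 hQ) := by
  refine tendsto_order.2 ⟨fun b hb => ?_, fun b hb => ?_⟩
  · filter_upwards [(tendsto_order.1 hent).1 b hb, eventually_gt_atTop 0] with n hn hn0
    obtain ⟨m, rfl⟩ : ∃ m, n = m + 1 := ⟨n - 1, by omega⟩
    refine lt_of_lt_of_le hn ?_
    have := lower_bound hD y p hp Q m
    gcongr
  · set η := (b - hQ) / 4 with hη
    have hη0 : 0 < η := by rw [hη]; linarith
    obtain ⟨k, hk⟩ := exists_small (fun n => ∫ ω, -Real.log (Qstr D Q (path D ω) n) ∂Q) hQ hent η hη0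
    have hd : 0 < 1 - Real.exp (-η) := by
      have : Real.exp (-η) < 1 := Real.exp_lt_one_iff.2 (by linarith)
      linarith
    have hd1 : 1 - Real.exp (-η) < 1 := by
      have := Real.exp_pos (-η)
      linarith
    obtain ⟨A, K, hAK⟩ := upper_bound hD y p hp hprod Q hstat (1 - Real.exp (-η)) hd hd1 k
      (hQ + 2 * η) (by
        have : - Real.log (1 - (1 - Real.exp (-η))) = η := by
          rw [sub_sub_cancel, Real.log_exp]; ring
        rw [this]
        linarith)
    have hy : (-1 : ℝ) ≤ (y.length : ℝ) - 1 := by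
      have : (0 : ℝ) ≤ y.length := by positivity
      linarith
    have hlim := final_lim (A - (k + 1) * (hQ + 2 * η)) K (hQ + 2 * η) ((y.length : ℝ) - 1) hy
    filter_upwards [(tendsto_order.1 hlim).2 b (by rw [hη]; linarith),
      eventually_gt_atTop (k + 1)] with n hn hnk
    refine lt_of_le_of_lt ?_ hn
    obtain ⟨N, rfl⟩ : ∃ N, n = N + k + 1 := ⟨n - k - 1, by omega⟩
    have h := hAK N
    apply div_le_div_of_nonneg_right _ (by positivity)
    refine h.trans (le_of_eq ?_)
    push_cast
    rw [show (y.length : ℝ) - 1 + (N + k + 1) + 3 = y.length + N + k + 3 by ring]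
    ring
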